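/- Let A be a 2n×2n matrix over F with A ∈ F_{I,J}, where I = diag(I₁, I₂), J = diag(J₁, J₂), and I₁, I₂, J₁, J₂ ∈ D_n. Partition A into n×n blocks A₁₁, A₁₂, A₂₁, A₂₂. Suppose (L₁₁, E₁₁, U₁₁) is an LEU-decomposition of A₁₁ ∈ F_{I₁,J₁}. Set I₁₁ = E₁₁E₁₁ᵀ, J₁₁ = E₁₁ᵀE₁₁, Q = L₁₁A₁₂, B = A₂₁U₁₁, A¹₂₁ = B(𝟙 − J₁₁), A¹₁₂ = (𝟙 − I₁₁)Q, A¹₂₂ = A₂₂ − B E₁₁ᵀ Q. Suppose (L₁₂, E₁₂, U₁₂) is an LEU-decomposition of A¹₁₂ ∈ F_{I₁(𝟙−I₁₁), J₂} and (L₂₁, E₂₁, U₂₁) is an LEU-decomposition of A¹₂₁ ∈ F_{I₂, J₁(𝟙−J₁₁)}. Set I₂₁ = E₂₁E₂₁ᵀ, J₁₂ = E₁₂ᵀE₁₂, G = L₂₁A¹₂₂U₁₂, A²₂₂ = (𝟙 − I₂₁)G(𝟙 − J₁₂), and let (L₂₂, E₂₂, U₂₂) be an LEU-decomposition of A²₂₂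 ∈ F_{I₂(𝟙−I₂₁), J₂(𝟙−J₁₂)}. Define W = G E₁₂ᵀ L₁₂ + L₂₁ B E₁₁ᵀ, V = U₂₁ E₂₁ᵀ G (𝟙 − J₁₂) + E₁₁ᵀ Q U₁₂, and the block matrices L = [[L₁₂L₁₁, 0],[−L₂₂WL₁₁, L₂₂L₂₁]], U = [[U₁₁U₂₁, −U₁₁VU₂₂],[0, U₁₂U₂₂]], E = [[E₁₁, E₁₂],[E₂₁, E₂₂]]. Then (L, E, U) is an LEU-decomposition of A ∈ F_{I,J}: L is invertible lower triangular, U is upper unitriangular, E ∈ P_{2n}, LAU = E, L − (𝟙 − I_E) ∈ F_{I, I_E}, and U − (𝟙 − J_E) ∈ F_{J_E, J}. -/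

import Mathlib

open Matrix

/-- `P_n`: matrices all of whose entries lie in `{0,1}`, with at most one nonzero
entry in each row and at most one nonzero entry in each column. -/
def InP {F : Type*} [Field F] {m : Type*} (E : Matrix m m F) : Prop :=
  (∀ i j, E i j = 0 ∨ E i j = 1) ∧
  (∀ i j k, E i j ≠ 0 → E i k ≠ 0 → j = k) ∧
  (∀ i j k, E i j ≠ 0 → E k j ≠ 0 → i = k)

/-- `D_n`: diagonal matrices with diagonal entries in `{0,1}`. -/
def InD {F : Type*} [Field F] {m : Type*} (M : Matrix m m F) : Prop :=
  M.IsDiag ∧ ∀ i, M i i = 0 ∨ M i i = 1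

/-- `F_{I,J}`: the set of matrices `B` with `I * B * J = B`. -/
def InFIJ {F : Type*} [Field F] {n : ℕ} (I J B : Matrix (Fin n) (Fin n) F) : Prop :=
  I * B * J = B

/-- `(L, E, U)` is an LEU-decomposition of `A ∈ F_{I,J}`: `A = L⁻¹ * E * U⁻¹`,
`E ∈ P_n`, `L` is an invertible lower triangular matrix, `U` is an upper
triangular matrix with unit diagonal, `L - (𝟙 - I_E) ∈ F_{I, I_E}` and
`U - (𝟙 - J_E) ∈ F_{J_E, J}`, where `I_E = E * Eᵀ` and `J_E = Eᵀ * E`. -/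
def IsLEU {F : Type*} [Field F] {n : ℕ}
    (I J A L E U : Matrix (Fin n) (Fin n) F) : Prop :=
  A = L⁻¹ * E * U⁻¹ ∧ InP E ∧ IsUnit L ∧
  (∀ i j : Fin n, i < j → L i j = 0) ∧
  (∀ i j : Fin n, j < i → U i j = 0) ∧ (∀ i, U i i = 1) ∧
  InFIJ I (E * Eᵀ) (L - (1 - E * Eᵀ)) ∧
  InFIJ (Eᵀ * E) J (U - (1 - Eᵀ * E))

/-- A `2n×2n` matrix built from four `n×n` blocks, indexed by `Fin (n+n)`. -/
def blk {F : Type*} [Field F] {n : ℕ} (A B C D : Matrix (Fin n) (Fin n) F) :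
    Matrix (Fin (n + n)) (Fin (n + n)) F :=
  (Matrix.fromBlocks A B C D).submatrix finSumFinEquiv.symm finSumFinEquiv.symm

theorem InP.mul_tr_mul {F : Type*} [Field F] {n : ℕ} {E : Matrix (Fin n) (Fin n) F}
    (h : InP E) {i j : Fin n} (hij : E i j ≠ 0) (X : Matrix (Fin n) (Fin n) F) (k : Fin n) :
    (Eᵀ * X) j k = X i k := by
  rw [Matrix.mul_apply, Finset.sum_eq_single i]
  · have := (h.1 i j).resolve_left hij
    simp [this]
  · intro b _ hb
    have : E b j = 0 := by
      by_contra hne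
      exact hb (h.2.2 b j i hne hij)
    simp [this]
  · simp

theorem InP.tr {F : Type*} [Field F] {m : Type*} {E : Matrix m m F}
    (h : InP E) : InP Eᵀ :=
  ⟨fun i j => h.1 j i, fun i j k => h.2.2 j i k, fun i j k => h.2.1 j i k⟩

theorem InP.ete {F : Type*} [Field F] {n : ℕ} {E : Matrix (Fin n) (Fin n) F}
    (h : InP E) : E * Eᵀ * E = E := by
  ext i k
  rw [mul_assoc, Matrix.mul_apply]
  by_cases hz : ∃ j, E i j ≠ 0
  · obtain ⟨j, hj⟩ := hz
    rw [Finset.sum_eq_single j]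
    · rw [h.mul_tr_mul hj, (h.1 i j).resolve_left hj, one_mul]
    · intro b _ hb
      have : E i b = 0 := by
        by_contra hne
        exact hb (h.2.1 i b j hne hj)
      simp [this]
    · simp
  · push Not at hz
    simp [hz]

theorem InD.idem {F : Type*} [Field F] {n : ℕ} {I : Matrix (Fin n) (Fin n) F}
    (h : InD I) : I * I = I ∧ Iᵀ = I := by
  obtain ⟨hd, h1⟩ := h
  have hI : I = Matrix.diagonal I.diag := hd.diagonal_diag.symm
  constructor
  · rw [hI, Matrix.diagonal_mul_diagonal]
    congr 1
    ext i
    rcases h1 i with h | h <;> simp [h]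
  · rw [hI, Matrix.diagonal_transpose]

structure Facts {R : Type*} [Ring R] (i j a l e t u : R) : Prop where
  main : l * a * u = e
  ete : e * t * e = e
  tet : t * e * t = t
  le : l * (1 - e * t) = 1 - e * t
  li : (1 - i) * l = 1 - i
  ie : i * e = e
  ti : t * i = t
  ue : (1 - t * e) * u = 1 - t * e
  uj : u * (1 - j) = 1 - j
  ej : e * j = e
  jt : j * t = t

theorem isUnit_of_unitri {F : Type*} [Field F] {n : ℕ} {U : Matrix (Fin n) (Fin n) F}
    (h : ∀ i j : Fin n, j < i → U i j = 0) (h1 : ∀ i, U i i = 1) : IsUnit U := by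
  rw [Matrix.isUnit_iff_isUnit_det, Matrix.det_of_isUpperTriangular (fun i j hij => h i j hij)]
  simp [h1]

theorem facts_aux {R : Type*} [Ring R] (i j a l e t u : R)
    (main : l * a * u = e) (ete : e * t * e = e)
    (hl : i * (l - (1 - e * t)) * (e * t) = l - (1 - e * t))
    (hu : t * e * (u - (1 - t * e)) * j = u - (1 - t * e))
    (hi : i * i = i) (hj : j * j = j) (hia : i * a = a) (haj : a * j = a)
    (tet : t * e * t = t) (ci : i * (e * t) = e * t * i) (cj : j * (t * e) = t * e * j)
    (htr : i * e = e → t * i = t) (htr' : e * j = e → j * t = t) :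
    Facts i j a l e t u := by
  have le : l * (1 - e * t) = 1 - e * t := by
    have : (l - (1 - e * t)) * (1 - e * t) = 0 := by
      rw [← hl]
      linear_combination (norm := noncomm_ring) -i * (l - (1 - e * t)) * ete * t
    linear_combination (norm := noncomm_ring) this + ete * t
  have ue : (1 - t * e) * u = 1 - t * e := by
    have : (1 - t * e) * (u - (1 - t * e)) = 0 := by
      rw [← hu]
      linear_combination (norm := noncomm_ring) -t * ete * (u - (1 - t * e)) * j
    linear_combination (norm := noncomm_ring) this + t * ete
  have li0 : (1 - i) * (l - (1 - e * t)) = 0 := by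
    rw [← hl]
    linear_combination (norm := noncomm_ring) - hi * (l - (1 - e * t)) * (e * t)
  have uj0 : (u - (1 - t * e)) * (1 - j) = 0 := by
    rw [← hu]
    linear_combination (norm := noncomm_ring) - t * e * (u - (1 - t * e)) * hj
  have ie : i * e = e := by
    have h1 : (1 - i) * e = (1 - i) * (1 - e * t) * a * u := by
      linear_combination (norm := noncomm_ring) -(1 - i) * main + li0 * a * u
    linear_combination (norm := noncomm_ring) -h1 - ci * a * u + (1 - e * t) * hia * u
  have ej : e * j = e := by
    have h1 : e * (1 - j) = l * a * (1 - t * e) * (1 - j) := by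
      linear_combination (norm := noncomm_ring) -main * (1 - j) + l * a * uj0
    linear_combination (norm := noncomm_ring) -h1 + l * a * cj + l * haj * (1 - t * e)
  refine ⟨main, ete, tet, le, ?_, ie, htr ie, ue, ?_, ej, htr' ej⟩
  · linear_combination (norm := noncomm_ring) li0 + ie * t
  · linear_combination (norm := noncomm_ring) uj0 + t * ej

theorem InD.comm {F : Type*} [Field F] {n : ℕ} {I J : Matrix (Fin n) (Fin n) F}
    (h : InD I) (h' : InD J) : I * J = J * I := by
  rw [← h.1.diagonal_diag, ← h'.1.diagonal_diag, Matrix.diagonal_mul_diagonal,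
    Matrix.diagonal_mul_diagonal]
  congr 1
  ext i
  exact mul_comm _ _

theorem InD.mul {F : Type*} [Field F] {n : ℕ} {I J : Matrix (Fin n) (Fin n) F}
    (h : InD I) (h' : InD J) : InD (I * J) := by
  rw [← h.1.diagonal_diag, ← h'.1.diagonal_diag, Matrix.diagonal_mul_diagonal]
  refine ⟨Matrix.isDiag_diagonal _, fun i => ?_⟩
  rcases h.2 i with h | h <;> rcases h'.2 i with h' | h' <;> simp [h, h']

theorem InD.one_sub {F : Type*} [Field F] {n : ℕ} {I : Matrix (Fin n) (Fin n) F}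
    (h : InD I) : InD (1 - I) := by
  refine ⟨fun i j hij => ?_, fun i => ?_⟩
  · have := h.1 hij
    simp [this, hij]
  · rcases h.2 i with h | h <;> simp [h]

theorem InP.inD {F : Type*} [Field F] {n : ℕ} {E : Matrix (Fin n) (Fin n) F}
    (h : InP E) : InD (Eᵀ * E) := by
  have key : ∀ i j, (Eᵀ * E) i j = 0 ∨ (i = j ∧ (Eᵀ * E) i j = 1) := by
    intro i j
    by_cases hz : ∃ k, E k i ≠ 0
    · obtain ⟨k, hk⟩ := hz
      rw [h.mul_tr_mul hk]
      by_cases hij : E k j = 0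
      · exact Or.inl hij
      · exact Or.inr ⟨h.2.1 k i j hk hij, (h.1 k j).resolve_left hij⟩
    · push Not at hz
      left
      simp [Matrix.mul_apply, hz]
  exact ⟨fun i j hij => (key i j).resolve_right (fun h => hij h.1),
    fun i => (key i i).imp id (fun h => h.2)⟩

theorem IsLEU.facts {F : Type*} [Field F] {n : ℕ} {I J A L E U : Matrix (Fin n) (Fin n) F}
    (h : IsLEU I J A L E U) (hI : InD I) (hJ : InD J) (hIA : I * A = A) (hAJ : A * J = A) :
    Facts I J A L E Eᵀ U := by
  obtain ⟨h1, hP, hL, -, h5, h6, h7, h8⟩ := h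
  have hU := isUnit_of_unitri h5 h6
  have ete := hP.ete
  rw [Matrix.isUnit_iff_isUnit_det] at hL hU
  have hD' : InD (E * Eᵀ) := by simpa using hP.tr.inD
  refine facts_aux _ _ _ _ _ _ _ ?_ ete h7 h8 hI.idem.1 hJ.idem.1 hIA hAJ ?_
    (hI.comm hD') (hJ.comm hP.inD) ?_ ?_
  · rw [h1]
    simp only [mul_assoc]
    rw [Matrix.nonsing_inv_mul _ hU, Matrix.mul_nonsing_inv_cancel_left _ _ hL, mul_one]
  · simpa using hP.tr.ete
  · intro h
    have := congrArg Matrix.transpose h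
    rwa [Matrix.transpose_mul, hI.idem.2] at this
  · intro h
    have := congrArg Matrix.transpose h
    rwa [Matrix.transpose_mul, hJ.idem.2] at this

theorem blk_mul {F : Type*} [Field F] {n : ℕ} (A B C D A' B' C' D' : Matrix (Fin n) (Fin n) F) :
    blk A B C D * blk A' B' C' D' =
      blk (A * A' + B * C') (A * B' + B * D') (C * A' + D * C') (C * B' + D * D') := by
  simp only [blk, Matrix.submatrix_mul_equiv, Matrix.fromBlocks_multiply]

theorem blk_tr {F : Type*} [Field F] {n : ℕ} (A B C D : Matrix (Fin n) (Fin n) F) :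
    (blk A B C D)ᵀ = blk Aᵀ Cᵀ Bᵀ Dᵀ := by
  simp only [blk, Matrix.transpose_submatrix, Matrix.fromBlocks_transpose]

theorem blk_one {F : Type*} [Field F] {n : ℕ} :
    (1 : Matrix (Fin (n + n)) (Fin (n + n)) F) = blk 1 0 0 1 := by
  simp [blk]

theorem blk_sub {F : Type*} [Field F] {n : ℕ} (A B C D A' B' C' D' : Matrix (Fin n) (Fin n) F) :
    blk A B C D - blk A' B' C' D' = blk (A - A') (B - B') (C - C') (D - D') := by
  ext i j
  induction i using Fin.addCases <;> induction j using Fin.addCases <;> simp [blk, -Fin.natAdd_eq_addNat]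

theorem blk_inj {F : Type*} [Field F] {n : ℕ} {A B C D A' B' C' D' : Matrix (Fin n) (Fin n) F}
    (h : blk A B C D = blk A' B' C' D') : A = A' ∧ B = B' ∧ C = C' ∧ D = D' := by
  have h2 : Matrix.fromBlocks A B C D = Matrix.fromBlocks A' B' C' D' := by
    have := congrArg (fun M => M.submatrix finSumFinEquiv finSumFinEquiv) h
    simpa [blk, Matrix.submatrix_submatrix] using this
  exact Matrix.fromBlocks_inj.1 h2

theorem blk_forall {F : Type*} [Field F] {n : ℕ} {A B C D : Matrix (Fin n) (Fin n) F}
    (P : Fin (n + n) → Fin (n + n) → F → Prop)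
    (h1 : ∀ i j, P (Fin.castAdd n i) (Fin.castAdd n j) (A i j))
    (h2 : ∀ i j, P (Fin.castAdd n i) (Fin.natAdd n j) (B i j))
    (h3 : ∀ i j, P (Fin.natAdd n i) (Fin.castAdd n j) (C i j))
    (h4 : ∀ i j, P (Fin.natAdd n i) (Fin.natAdd n j) (D i j)) :
    ∀ i j, P i j (blk A B C D i j) := by
  intro i j
  induction i using Fin.addCases <;> induction j using Fin.addCases <;> simp [blk, -Fin.natAdd_eq_addNat, *]

theorem ltri_mul {F : Type*} [Field F] {n : ℕ} {A B : Matrix (Fin n) (Fin n) F}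
    (hA : ∀ i j : Fin n, i < j → A i j = 0) (hB : ∀ i j : Fin n, i < j → B i j = 0) :
    ∀ i j : Fin n, i < j → (A * B) i j = 0 := by
  intro i j hij
  rw [Matrix.mul_apply]
  refine Finset.sum_eq_zero fun k _ => ?_
  rcases lt_or_ge i k with h | h
  · rw [hA i k h, zero_mul]
  · rw [hB k j (lt_of_le_of_lt h hij), mul_zero]

theorem utri_mul {F : Type*} [Field F] {n : ℕ} {A B : Matrix (Fin n) (Fin n) F}
    (hA : ∀ i j : Fin n, j < i → A i j = 0) (hB : ∀ i j : Fin n, j < i → B i j = 0) :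
    ∀ i j : Fin n, j < i → (A * B) i j = 0 := by
  intro i j hij
  rw [Matrix.mul_apply]
  refine Finset.sum_eq_zero fun k _ => ?_
  rcases lt_or_ge k i with h | h
  · rw [hA i k h, zero_mul]
  · rw [hB k j (lt_of_lt_of_le hij h), mul_zero]

theorem utri_diag {F : Type*} [Field F] {n : ℕ} {A B : Matrix (Fin n) (Fin n) F}
    (hA : ∀ i j : Fin n, j < i → A i j = 0) (hB : ∀ i j : Fin n, j < i → B i j = 0)
    (hA1 : ∀ i, A i i = 1) (hB1 : ∀ i, B i i = 1) :
    ∀ i : Fin n, (A * B) i i = 1 := by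
  intro i
  rw [Matrix.mul_apply, Finset.sum_eq_single i]
  · rw [hA1, hB1, one_mul]
  · intro k _ hk
    rcases lt_or_gt_of_ne hk with h | h
    · rw [hA i k h, zero_mul]
    · rw [hB k i h, mul_zero]
  · simp

theorem InP.disj_row {F : Type*} [Field F] {n : ℕ} {E E' : Matrix (Fin n) (Fin n) F}
    (h : InP E) (h0 : Eᵀ * E' = 0) {i j k : Fin n} (hj : E i j ≠ 0) (hk : E' i k ≠ 0) : False := by
  apply hk
  rw [← h.mul_tr_mul hj E' k, h0, Matrix.zero_apply]

theorem InP.disj_col {F : Type*} [Field F] {n : ℕ} {E E' : Matrix (Fin n) (Fin n) F}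
    (h : InP E) (h0 : E' * Eᵀ = 0) {i j k : Fin n} (hj : E i k ≠ 0) (hk : E' j k ≠ 0) :
    False := by
  refine h.tr.disj_row (E' := E'ᵀ) (i := k) (j := i) (k := j) ?_ hj hk
  have := congrArg Matrix.transpose h0
  simpa using this

theorem blk_inP {F : Type*} [Field F] {n : ℕ} {A B C D : Matrix (Fin n) (Fin n) F}
    (hA : InP A) (hB : InP B) (hC : InP C) (hD : InP D)
    (hAB : Aᵀ * B = 0) (hCD : Cᵀ * D = 0) (hCA : C * Aᵀ = 0) (hDB : D * Bᵀ = 0) :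
    InP (blk A B C D) := by
  refine ⟨blk_forall (fun _ _ x => x = 0 ∨ x = 1) hA.1 hB.1 hC.1 hD.1, ?_, ?_⟩
  · intro i j k
    induction i using Fin.addCases <;> induction j using Fin.addCases <;>
      induction k using Fin.addCases <;> simp only [blk, Matrix.submatrix_apply,
        finSumFinEquiv_symm_apply_castAdd, finSumFinEquiv_symm_apply_natAdd,
        Matrix.fromBlocks_apply₁₁, Matrix.fromBlocks_apply₁₂, Matrix.fromBlocks_apply₂₁,
        Matrix.fromBlocks_apply₂₂] <;> intro h1 h2
    · rw [hA.2.1 _ _ _ h1 h2]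
    · exact (hA.disj_row hAB h1 h2).elim
    · exact (hA.disj_row hAB h2 h1).elim
    · rw [hB.2.1 _ _ _ h1 h2]
    · rw [hC.2.1 _ _ _ h1 h2]
    · exact (hC.disj_row hCD h1 h2).elim
    · exact (hC.disj_row hCD h2 h1).elim
    · rw [hD.2.1 _ _ _ h1 h2]
  · intro i j k
    induction j using Fin.addCases <;> induction i using Fin.addCases <;>
      induction k using Fin.addCases <;> simp only [blk, Matrix.submatrix_apply,
        finSumFinEquiv_symm_apply_castAdd, finSumFinEquiv_symm_apply_natAdd,
        Matrix.fromBlocks_apply₁₁, Matrix.fromBlocks_apply₁₂, Matrix.fromBlocks_apply₂₁,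
        Matrix.fromBlocks_apply₂₂] <;> intro h1 h2
    · rw [hA.2.2 _ _ _ h1 h2]
    · exact (hA.disj_col hCA h1 h2).elim
    · exact (hA.disj_col hCA h2 h1).elim
    · rw [hC.2.2 _ _ _ h1 h2]
    · rw [hB.2.2 _ _ _ h1 h2]
    · exact (hB.disj_col hDB h1 h2).elim
    · exact (hB.disj_col hDB h2 h1).elim
    · rw [hD.2.2 _ _ _ h1 h2]

theorem orthoL {R : Type*} [Ring R] {i e t f s l : R} (ete : e * t * e = e) (tet : t * e * t = t)
    (ti : t * i = t) (hi : i * i = i) (ie : i * (1 - e * t) * f = f)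
    (si : s * (i * (1 - e * t)) = s) (li : (1 - i * (1 - e * t)) * l = 1 - i * (1 - e * t)) :
    t * f = 0 ∧ s * e = 0 ∧ i * f = f ∧ (1 - i) * l = 1 - i := by
  refine ⟨?_, ?_, ?_, ?_⟩
  · linear_combination (norm := noncomm_ring) -t * ie + ti * (1 - e * t) * f - tet * f
  · linear_combination (norm := noncomm_ring) -si * e - s * i * ete
  · linear_combination (norm := noncomm_ring) -i * ie + hi * (1 - e * t) * f + ie
  · linear_combination (norm := noncomm_ring) (1 - i) * li - hi * (1 - e * t) * (l - 1)

theorem orthoR {R : Type*} [Ring R] {j e t f s u : R} (ete : e * t * e = e) (tet : t * e * t = t)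
    (ej : e * j = e) (hj : j * j = j) (fj : f * (j * (1 - t * e)) = f)
    (js : j * (1 - t * e) * s = s) (uj : u * (1 - j * (1 - t * e)) = 1 - j * (1 - t * e)) :
    f * t = 0 ∧ e * s = 0 ∧ f * j = f ∧ u * (1 - j) = 1 - j := by
  refine ⟨?_, ?_, ?_, ?_⟩
  · linear_combination (norm := noncomm_ring) -fj * t - f * j * tet
  · linear_combination (norm := noncomm_ring) -e * js + ej * (1 - t * e) * s - ete * s
  · linear_combination (norm := noncomm_ring) -fj * j + f * hj - f * j * t * ej + fj
  · linear_combination (norm := noncomm_ring) uj * (1 - j) + (u - 1) * (-hj + j * t * ej)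

theorem stL {R : Type*} [Ring R] {i e t x : R} (ete : e * t * e = e) (ie : i * e = e)
    (ix : i * x = x) : i * (1 - e * t) * ((1 - e * t) * x) = (1 - e * t) * x := by
  linear_combination (norm := noncomm_ring) i * ete * t * x + ix - ie * t * x

theorem stR {R : Type*} [Ring R] {j e t x : R} (ete : e * t * e = e) (ej : e * j = e)
    (xj : x * j = x) : (x * (1 - t * e)) * (j * (1 - t * e)) = x * (1 - t * e) := by
  linear_combination (norm := noncomm_ring) xj * (1 - t * e) - x * t * ej * (1 - t * e) + x * t * ete

theorem fixL {R : Type*} [Ring R] {e t l x : R} (le : l * (1 - e * t) = 1 - e * t)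
    (h : t * x = 0) : l * x = x := by
  linear_combination (norm := noncomm_ring) le * x + l * e * h - e * h

theorem fixR {R : Type*} [Ring R] {e t u x : R} (ue : (1 - t * e) * u = 1 - t * e)
    (h : x * t = 0) : x * u = x := by
  linear_combination (norm := noncomm_ring) x * ue + h * e * u - h * e

theorem backL {R : Type*} [Ring R] {i l p : R} (h1 : l * (1 - p) = 1 - p)
    (h2 : (1 - i) * l = 1 - i) (h3 : i * p = p) (hp : p * p = p) :
    i * (l - (1 - p)) * p = l - (1 - p) := by
  have a1 : (l - (1 - p)) * p = l - (1 - p) := by linear_combination (norm := noncomm_ring) -h1 + hp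
  have a2 : i * (l - (1 - p)) = l - (1 - p) := by linear_combination (norm := noncomm_ring) -h2 + h3
  rw [a2, a1]

theorem backR {R : Type*} [Ring R] {j u p : R} (h1 : (1 - p) * u = 1 - p)
    (h2 : u * (1 - j) = 1 - j) (h3 : p * j = p) (hp : p * p = p) :
    p * (u - (1 - p)) * j = u - (1 - p) := by
  have a1 : p * (u - (1 - p)) = u - (1 - p) := by linear_combination (norm := noncomm_ring) -h1 + hp
  have a2 : (u - (1 - p)) * j = u - (1 - p) := by linear_combination (norm := noncomm_ring) -h2 + h3
  rw [a1, a2]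

/-- Theorem 1 (recursive step): from LEU-decompositions of the four intermediate
`n×n` matrices one obtains an LEU-decomposition `(L, E, U)` of the `2n×2n`
matrix `A`, with the blocks of `L`, `E`, `U` given by formulas (13)–(14). -/
theorem leu_recursive_step {F : Type*} [Field F] {n : ℕ} (hn : 0 < n)
    (I₁ I₂ J₁ J₂ : Matrix (Fin n) (Fin n) F)
    (hI₁ : InD I₁) (hI₂ : InD I₂) (hJ₁ : InD J₁) (hJ₂ : InD J₂)
    (A₁₁ A₁₂ A₂₁ A₂₂ : Matrix (Fin n) (Fin n) F)
    (hA : InFIJ (blk I₁ 0 0 I₂) (blk J₁ 0 0 J₂) (blk A₁₁ A₁₂ A₂₁ A₂₂))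
    -- (7): LEU-decomposition of A₁₁
    (L₁₁ E₁₁ U₁₁ : Matrix (Fin n) (Fin n) F)
    (h11 : IsLEU I₁ J₁ A₁₁ L₁₁ E₁₁ U₁₁)
    -- (8), (9)
    (Q B A'₂₁ A'₁₂ A'₂₂ : Matrix (Fin n) (Fin n) F)
    (hQ : Q = L₁₁ * A₁₂) (hB : B = A₂₁ * U₁₁)
    (h'21 : A'₂₁ = B * (1 - E₁₁ᵀ * E₁₁))
    (h'12 : A'₁₂ = (1 - E₁₁ * E₁₁ᵀ) * Q)
    (h'22 : A'₂₂ = A₂₂ - B * E₁₁ᵀ * Q)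
    -- (10): LEU-decompositions of A¹₁₂ and A¹₂₁
    (L₁₂ E₁₂ U₁₂ : Matrix (Fin n) (Fin n) F)
    (h12 : IsLEU (I₁ * (1 - E₁₁ * E₁₁ᵀ)) J₂ A'₁₂ L₁₂ E₁₂ U₁₂)
    (L₂₁ E₂₁ U₂₁ : Matrix (Fin n) (Fin n) F)
    (h21 : IsLEU I₂ (J₁ * (1 - E₁₁ᵀ * E₁₁)) A'₂₁ L₂₁ E₂₁ U₂₁)
    -- (11)
    (G A''₂₂ : Matrix (Fin n) (Fin n) F)
    (hG : G = L₂₁ * A'₂₂ * U₁₂)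
    (h''22 : A''₂₂ = (1 - E₂₁ * E₂₁ᵀ) * G * (1 - E₁₂ᵀ * E₁₂))
    -- (12): LEU-decomposition of A²₂₂
    (L₂₂ E₂₂ U₂₂ : Matrix (Fin n) (Fin n) F)
    (h22 : IsLEU (I₂ * (1 - E₂₁ * E₂₁ᵀ)) (J₂ * (1 - E₁₂ᵀ * E₁₂)) A''₂₂ L₂₂ E₂₂ U₂₂)
    -- (13)
    (W V : Matrix (Fin n) (Fin n) F)
    (hW : W = G * E₁₂ᵀ * L₁₂ + L₂₁ * B * E₁₁ᵀ)
    (hV : V = U₂₁ * E₂₁ᵀ * G * (1 - E₁₂ᵀ * E₁₂) + E₁₁ᵀ * Q * U₁₂) :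
    -- (14), (15): the assembled triple is an LEU-decomposition of A, and LAU = E
    IsLEU (blk I₁ 0 0 I₂) (blk J₁ 0 0 J₂) (blk A₁₁ A₁₂ A₂₁ A₂₂)
      (blk (L₁₂ * L₁₁) 0 (-(L₂₂ * W * L₁₁)) (L₂₂ * L₂₁))
      (blk E₁₁ E₁₂ E₂₁ E₂₂)
      (blk (U₁₁ * U₂₁) (-(U₁₁ * V * U₂₂)) 0 (U₁₂ * U₂₂)) ∧
    blk (L₁₂ * L₁₁) 0 (-(L₂₂ * W * L₁₁)) (L₂₂ * L₂₁) *
        blk A₁₁ A₁₂ A₂₁ A₂₂ *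
        blk (U₁₁ * U₂₁) (-(U₁₁ * V * U₂₂)) 0 (U₁₂ * U₂₂) =
      blk E₁₁ E₁₂ E₂₁ E₂₂ := by
  clear hn
  subst h'21 h'12 h'22 h''22
  have hblk := hA
  simp only [InFIJ, blk_mul, zero_mul, mul_zero, add_zero, zero_add] at hblk
  obtain ⟨b11, b12, b21, b22⟩ := blk_inj hblk
  clear hblk
  have hi1 := hI₁.idem.1
  have hi2 := hI₂.idem.1
  have hj1 := hJ₁.idem.1
  have hj2 := hJ₂.idem.1
  have getL : ∀ {I X J : Matrix (Fin n) (Fin n) F}, I * I = I → I * X * J = X → I * X = X := by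
    intro I X J hI h
    linear_combination (norm := noncomm_ring) -I * h + hI * X * J + h
  have getR : ∀ {I X J : Matrix (Fin n) (Fin n) F}, J * J = J → I * X * J = X → X * J = X := by
    intro I X J hJ h
    linear_combination (norm := noncomm_ring) -h * J + I * X * hJ + h
  have ia12 := getL hi1 b12
  have ia21 := getL hi2 b21
  have ia22 := getL hi2 b22
  have aj12 := getR hj2 b12
  have aj21 := getR hj1 b21
  have aj22 := getR hj2 b22
  have f11 := h11.facts hI₁ hJ₁ (getL hi1 b11) (getR hj1 b11)
  have iq : I₁ * Q = Q := by linear_combination (norm := noncomm_ring) -f11.li * A₁₂ + ia12 + (I₁ - 1) * hQ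
  have qj : Q * J₂ = Q := by linear_combination (norm := noncomm_ring) hQ * (J₂ - 1) + L₁₁ * aj12
  have bj : B * J₁ = B := by linear_combination (norm := noncomm_ring) -A₂₁ * f11.uj + aj21 + hB * (J₁ - 1)
  have ib : I₂ * B = B := by linear_combination (norm := noncomm_ring) (I₂ - 1) * hB + ia21 * U₁₁
  have hP11 := h11.2.1
  have hP12 := h12.2.1
  have hP21 := h21.2.1
  have hP22 := h22.2.1
  have dI : ∀ {E : Matrix (Fin n) (Fin n) F}, InP E → InD (1 - E * Eᵀ) := by
    intro E h
    have := h.tr.inD.one_sub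
    simpa using this
  have f12 := h12.facts (hI₁.mul (dI hP11)) hJ₂ (stL f11.ete f11.ie iq)
    (by linear_combination (norm := noncomm_ring) (1 - E₁₁ * E₁₁ᵀ) * qj)
  have f21 := h21.facts hI₂ (hJ₁.mul hP11.inD.one_sub) (by linear_combination (norm := noncomm_ring) ib * (1 - E₁₁ᵀ * E₁₁))
    (stR f11.ete f11.ej bj)
  have ig : I₂ * G = G := by
    linear_combination (norm := noncomm_ring) (I₂ - 1) * hG - f21.li * (A₂₂ - B * E₁₁ᵀ * Q) * U₁₂ + ia22 * U₁₂ - ib * E₁₁ᵀ * Q * U₁₂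
  have gj : G * J₂ = G := by
    linear_combination (norm := noncomm_ring) hG * (J₂ - 1) - L₂₁ * (A₂₂ - B * E₁₁ᵀ * Q) * f12.uj + L₂₁ * aj22 - L₂₁ * B * E₁₁ᵀ * qj
  have f22 := h22.facts (hI₂.mul (dI hP21)) (hJ₂.mul hP12.inD.one_sub)
    (by
      have := stL (x := G * (1 - E₁₂ᵀ * E₁₂)) f21.ete f21.ie (by linear_combination (norm := noncomm_ring) ig * (1 - E₁₂ᵀ * E₁₂))
      simpa only [mul_assoc] using this)
    (stR f12.ete f12.ej (by linear_combination (norm := noncomm_ring) (1 - E₂₁ * E₂₁ᵀ) * gj))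
  obtain ⟨z1, z1', ie12, li12⟩ := orthoL f11.ete f11.tet f11.ti hi1 f12.ie f12.ti f12.li
  obtain ⟨z2, z2', ej21, uj21⟩ := orthoR f11.ete f11.tet f11.ej hj1 f21.ej f21.jt f21.uj
  obtain ⟨z3, z3', ie22, li22⟩ := orthoL f21.ete f21.tet f21.ti hi2 f22.ie f22.ti f22.li
  obtain ⟨z4, z4', ej22, uj22⟩ := orthoR f12.ete f12.tet f12.ej hj2 f22.ej f22.jt f22.uj
  have l11e12 := fixL f11.le z1
  have l12e11 := fixL f12.le z1'
  have l21e22 := fixL f21.le z3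
  have l22e21 := fixL f22.le z3'
  have e21u11 := fixR f11.ue z2
  have e11u21 := fixR f21.ue z2'
  have e22u12 := fixR f12.ue z4
  have e12u22 := fixR f22.ue z4'
  have ev : E₁₁ * V = E₁₁ * E₁₁ᵀ * Q * U₁₂ := by
    linear_combination (norm := noncomm_ring) E₁₁ * hV + e11u21 * (E₂₁ᵀ * G * (1 - E₁₂ᵀ * E₁₂)) + z2' * (G * (1 - E₁₂ᵀ * E₁₂))
  have we : W * E₁₁ = L₂₁ * B * E₁₁ᵀ * E₁₁ := by
    linear_combination (norm := noncomm_ring) hW * E₁₁ + G * E₁₂ᵀ * l12e11 + G * z1'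
  have hv1 : (1 - E₁₁ᵀ * E₁₁) * V
      = (1 - E₁₁ᵀ * E₁₁) * U₂₁ * E₂₁ᵀ * G * (1 - E₁₂ᵀ * E₁₂) := by
    linear_combination (norm := noncomm_ring) (1 - E₁₁ᵀ * E₁₁) * hV - f11.tet * Q * U₁₂
  have wq : W * Q * U₁₂ = G * E₁₂ᵀ * E₁₂ + L₂₁ * B * E₁₁ᵀ * Q * U₁₂ := by
    linear_combination (norm := noncomm_ring) hW * Q * U₁₂ + G * E₁₂ᵀ * f12.main + G * E₁₂ᵀ * l12e11 * E₁₁ᵀ * Q * U₁₂ + G * z1' * E₁₁ᵀ * Q * U₁₂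
  have p11 : L₁₂ * L₁₁ * A₁₁ * (U₁₁ * U₂₁) = E₁₁ := by
    linear_combination (norm := noncomm_ring) L₁₂ * f11.main * U₂₁ + l12e11 * U₂₁ + e11u21
  have p12 : L₁₂ * L₁₁ * A₁₁ * (-(U₁₁ * V * U₂₂)) + L₁₂ * L₁₁ * A₁₂ * (U₁₂ * U₂₂) = E₁₂ := by
    linear_combination (norm := noncomm_ring) -L₁₂ * f11.main * V * U₂₂ - L₁₂ * ev * U₂₂ - L₁₂ * hQ * U₁₂ * U₂₂ + f12.main * U₂₂ + e12u22
  have p21 : (-(L₂₂ * W * L₁₁) * A₁₁ + L₂₂ * L₂₁ * A₂₁) * (U₁₁ * U₂₁) = E₂₁ := by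
    linear_combination (norm := noncomm_ring) -L₂₂ * W * f11.main * U₂₁ - L₂₂ * we * U₂₁ - L₂₂ * L₂₁ * hB * U₂₁ + L₂₂ * f21.main + l22e21
  have p22 : (-(L₂₂ * W * L₁₁) * A₁₁ + L₂₂ * L₂₁ * A₂₁) * (-(U₁₁ * V * U₂₂)) +
      (-(L₂₂ * W * L₁₁) * A₁₂ + L₂₂ * L₂₁ * A₂₂) * (U₁₂ * U₂₂) = E₂₂ := by
    linear_combination (norm := noncomm_ring) L₂₂ * W * f11.main * V * U₂₂ + L₂₂ * we * V * U₂₂ + L₂₂ * L₂₁ * hB * V * U₂₂ - L₂₂ * L₂₁ * B * hv1 * U₂₂ - L₂₂ * f21.main * E₂₁ᵀ * G * (1 - E₁₂ᵀ * E₁₂) * U₂₂ + L₂₂ * W * hQ * U₁₂ * U₂₂ - L₂₂ * wq * U₂₂ - L₂₂ * hG * U₂₂ + f22.main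
  have key : blk (L₁₂ * L₁₁) 0 (-(L₂₂ * W * L₁₁)) (L₂₂ * L₂₁) *
        blk A₁₁ A₁₂ A₂₁ A₂₂ *
        blk (U₁₁ * U₂₁) (-(U₁₁ * V * U₂₂)) 0 (U₁₂ * U₂₂) =
      blk E₁₁ E₁₂ E₂₁ E₂₂ := by
    simp only [blk_mul, zero_mul, mul_zero, add_zero]
    rw [p11, p12, p21, p22]
  have hP : InP (blk E₁₁ E₁₂ E₂₁ E₂₂) := blk_inP hP11 hP12 hP21 hP22 z1 z3 z2 z4
  have hLt : ∀ i j : Fin (n + n), i < j →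
      blk (L₁₂ * L₁₁) 0 (-(L₂₂ * W * L₁₁)) (L₂₂ * L₂₁) i j = 0 := by
    apply blk_forall (fun i j x => i < j → x = 0)
    · intro i j hij
      exact ltri_mul h12.2.2.2.1 h11.2.2.2.1 i j hij
    · intro i j _
      rfl
    · intro i j hij
      have := i.2
      have := j.2
      simp only [Fin.lt_def, Fin.val_castAdd, Fin.val_natAdd] at hij
      omega
    · intro i j hij
      refine ltri_mul h22.2.2.2.1 h21.2.2.2.1 i j ?_
      simp only [Fin.lt_def, Fin.val_natAdd] at hij ⊢
      omega
  have hUt : ∀ i j : Fin (n + n), j < i →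
      blk (U₁₁ * U₂₁) (-(U₁₁ * V * U₂₂)) 0 (U₁₂ * U₂₂) i j = 0 := by
    apply blk_forall (fun i j x => j < i → x = 0)
    · intro i j hij
      exact utri_mul h11.2.2.2.2.1 h21.2.2.2.2.1 i j hij
    · intro i j hij
      have := i.2
      have := j.2
      simp only [Fin.lt_def, Fin.val_castAdd, Fin.val_natAdd] at hij
      omega
    · intro i j _
      rfl
    · intro i j hij
      refine utri_mul h12.2.2.2.2.1 h22.2.2.2.2.1 i j ?_
      simp only [Fin.lt_def, Fin.val_natAdd] at hij ⊢
      omega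
  have hU1 : ∀ i : Fin (n + n),
      blk (U₁₁ * U₂₁) (-(U₁₁ * V * U₂₂)) 0 (U₁₂ * U₂₂) i i = 1 := by
    have : ∀ i j : Fin (n + n), i = j →
      blk (U₁₁ * U₂₁) (-(U₁₁ * V * U₂₂)) 0 (U₁₂ * U₂₂) i j = 1 := by
      apply blk_forall (fun i j x => i = j → x = 1)
      · intro i j hij
        have hij : i = j := by simpa using hij
        subst hij
        exact utri_diag h11.2.2.2.2.1 h21.2.2.2.2.1 h11.2.2.2.2.2.1 h21.2.2.2.2.2.1 i
      · intro i j hij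
        have := i.2
        have := j.2
        simp only [Fin.ext_iff, Fin.val_castAdd, Fin.val_natAdd] at hij
        omega
      · intro i j hij
        have := i.2
        have := j.2
        simp only [Fin.ext_iff, Fin.val_castAdd, Fin.val_natAdd] at hij
        omega
      · intro i j hij
        have hij : i = j := by
          simp only [Fin.ext_iff, Fin.val_natAdd] at hij ⊢
          omega
        subst hij
        exact utri_diag h12.2.2.2.2.1 h22.2.2.2.2.1 h12.2.2.2.2.2.1 h22.2.2.2.2.2.1 i
    exact fun i => this i i rfl
  have hLu : IsUnit (blk (L₁₂ * L₁₁) 0 (-(L₂₂ * W * L₁₁)) (L₂₂ * L₂₁)) := by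
    rw [Matrix.isUnit_iff_isUnit_det, blk, Matrix.det_submatrix_equiv_self,
      Matrix.det_fromBlocks_zero₁₂, Matrix.det_mul, Matrix.det_mul]
    have u1 := (Matrix.isUnit_iff_isUnit_det _).1 h11.2.2.1
    have u2 := (Matrix.isUnit_iff_isUnit_det _).1 h12.2.2.1
    have u3 := (Matrix.isUnit_iff_isUnit_det _).1 h21.2.2.1
    have u4 := (Matrix.isUnit_iff_isUnit_det _).1 h22.2.2.1
    exact (u2.mul u1).mul (u4.mul u3)
  have hUu := isUnit_of_unitri hUt hU1
  have zt : ∀ {X Y : Matrix (Fin n) (Fin n) F}, X * Y = 0 → Yᵀ * Xᵀ = 0 := by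
    intro X Y h
    rw [← Matrix.transpose_mul, h, Matrix.transpose_zero]
  have hEE : blk E₁₁ E₁₂ E₂₁ E₂₂ * (blk E₁₁ E₁₂ E₂₁ E₂₂)ᵀ =
      blk (E₁₁ * E₁₁ᵀ + E₁₂ * E₁₂ᵀ) 0 0 (E₂₁ * E₂₁ᵀ + E₂₂ * E₂₂ᵀ) := by
    rw [blk_tr, blk_mul, z2', z4', z2, z4, add_zero]
  have hEE' : (blk E₁₁ E₁₂ E₂₁ E₂₂)ᵀ * blk E₁₁ E₁₂ E₂₁ E₂₂ =
      blk (E₁₁ᵀ * E₁₁ + E₂₁ᵀ * E₂₁) 0 0 (E₁₂ᵀ * E₁₂ + E₂₂ᵀ * E₂₂) := by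
    rw [blk_tr, blk_mul, z1, z3, z1', z3', add_zero]
  have hpp : ∀ {N : ℕ} {E : Matrix (Fin N) (Fin N) F}, InP E →
      E * Eᵀ * (E * Eᵀ) = E * Eᵀ ∧ Eᵀ * E * (Eᵀ * E) = Eᵀ * E := by
    intro N E h
    have := h.ete
    exact ⟨by linear_combination (norm := noncomm_ring) this * Eᵀ, by linear_combination (norm := noncomm_ring) Eᵀ * this⟩
  refine ⟨⟨?_, hP, hLu, hLt, hUt, hU1, ?_, ?_⟩, key⟩
  · rw [Matrix.isUnit_iff_isUnit_det] at hLu hUu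
    rw [← key]
    generalize blk (L₁₂ * L₁₁) 0 (-(L₂₂ * W * L₁₁)) (L₂₂ * L₂₁) = X at hLu ⊢
    generalize blk (U₁₁ * U₂₁) (-(U₁₁ * V * U₂₂)) 0 (U₁₂ * U₂₂) = Y at hUu ⊢
    simp only [mul_assoc]
    rw [Matrix.mul_nonsing_inv _ hUu, Matrix.nonsing_inv_mul_cancel_left _ _ hLu, mul_one]
  · refine backL ?_ ?_ ?_ (hpp hP).1
    · rw [hEE, blk_one, blk_sub, blk_mul]
      congr 1
      · linear_combination (norm := noncomm_ring) L₁₂ * (f11.le - l11e12 * E₁₂ᵀ) + f12.le - l12e11 * E₁₁ᵀ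
      · noncomm_ring
      · have hw : W * (1 - (E₁₁ * E₁₁ᵀ + E₁₂ * E₁₂ᵀ)) = 0 := by
          linear_combination (norm := noncomm_ring) hW * (1 - (E₁₁ * E₁₁ᵀ + E₁₂ * E₁₂ᵀ)) + G * E₁₂ᵀ * (f12.le - l12e11 * E₁₁ᵀ) - G * z1' * E₁₁ᵀ - G * f12.tet - L₂₁ * B * f11.tet - L₂₁ * B * z1 * E₁₂ᵀ
        linear_combination (norm := noncomm_ring) -L₂₂ * W * (f11.le - l11e12 * E₁₂ᵀ) - L₂₂ * hw
      · linear_combination (norm := noncomm_ring) L₂₂ * (f21.le - l21e22 * E₂₂ᵀ) + f22.le - l22e21 * E₂₁ᵀ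
    · rw [blk_one, blk_sub, blk_mul]
      congr 1
      · linear_combination (norm := noncomm_ring) li12 * L₁₁ + f11.li
      · noncomm_ring
      · have hw : (1 - I₂) * W = 0 := by
          linear_combination (norm := noncomm_ring) (1 - I₂) * hW - ig * E₁₂ᵀ * L₁₂ + f21.li * B * E₁₁ᵀ - ib * E₁₁ᵀ
        linear_combination (norm := noncomm_ring) -li22 * W * L₁₁ - hw * L₁₁
      · linear_combination (norm := noncomm_ring) li22 * L₂₁ + f21.li
    · rw [hEE, blk_mul]
      congr 1
      · linear_combination (norm := noncomm_ring) f11.ie * E₁₁ᵀ + ie12 * E₁₂ᵀ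
      · noncomm_ring
      · noncomm_ring
      · linear_combination (norm := noncomm_ring) f21.ie * E₂₁ᵀ + ie22 * E₂₂ᵀ
  · refine backR ?_ ?_ ?_ (hpp hP).2
    · rw [hEE', blk_one, blk_sub, blk_mul]
      congr 1
      · linear_combination (norm := noncomm_ring) (f11.ue - E₂₁ᵀ * e21u11) * U₂₁ + f21.ue - E₁₁ᵀ * e11u21
      · have hv : (1 - (E₁₁ᵀ * E₁₁ + E₂₁ᵀ * E₂₁)) * V = 0 := by
          linear_combination (norm := noncomm_ring) (1 - (E₁₁ᵀ * E₁₁ + E₂₁ᵀ * E₂₁)) * hV + (f21.ue - E₁₁ᵀ * e11u21) * E₂₁ᵀ * G * (1 - E₁₂ᵀ * E₁₂) - (E₁₁ᵀ * z2' + f21.tet) * G * (1 - E₁₂ᵀ * E₁₂) - (f11.tet + E₂₁ᵀ * z2) * Q * U₁₂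
        linear_combination (norm := noncomm_ring) -(f11.ue - E₂₁ᵀ * e21u11) * V * U₂₂ - hv * U₂₂
      · noncomm_ring
      · linear_combination (norm := noncomm_ring) (f12.ue - E₂₂ᵀ * e22u12) * U₂₂ + f22.ue - E₁₂ᵀ * e12u22
    · rw [blk_one, blk_sub, blk_mul]
      congr 1
      · linear_combination (norm := noncomm_ring) U₁₁ * uj21 + f11.uj
      · have hv : V * (1 - J₂) = 0 := by
          linear_combination (norm := noncomm_ring) hV * (1 - J₂) + U₂₁ * E₂₁ᵀ * (-gj + G * E₁₂ᵀ * f12.ej) + E₁₁ᵀ * Q * f12.uj - E₁₁ᵀ * qj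
        linear_combination (norm := noncomm_ring) -U₁₁ * V * uj22 - U₁₁ * hv
      · noncomm_ring
      · linear_combination (norm := noncomm_ring) U₁₂ * uj22 + f12.uj
    · rw [hEE', blk_mul]
      congr 1
      · linear_combination (norm := noncomm_ring) E₁₁ᵀ * f11.ej + E₂₁ᵀ * ej21
      · noncomm_ring
      · noncomm_ring
      · linear_combination (norm := noncomm_ring) E₁₂ᵀ * f12.ej + E₂₂ᵀ * ej22
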